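/- Let T be the Takagi function and define F : [0,1]^2 → ℝ by F(x,y) = T(x) + T(y). Then F has no finite directional derivative at any point of (0,1)^2 along the direction (1,1)/√2 (equivalently, h ↦ (F((x,y) + h(1,1)) − F(x,y))/h has no finite limit as h → 0, for any (x,y) ∈ (0,1)^2). -/

import Mathlib

/-!
Write `W t s = T (t + s) + T (t - s) - 2 T t` for the second difference of the Takagi function.
The equation `T t = dist (t, ℤ) + T (2 t) / 2` gives `W t s = δ t s + W (2 t) (2 s) / 2`, where
`δ t s` is the second difference of `dist (·, ℤ)`. Now `δ t s ≥ -2 s` always, `δ t s < 0` only if `t`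
is within `s` of a half-integer, and then `2 t` is within `2 s` of an integer, a situation which
persists under doubling and in which `δ ≥ 0`. Hence a negative contribution occurs at most once as
long as the step stays at most `1 / 2`, so `W t s ≥ 2⁻ⁿ W (2ⁿ t) (2ⁿ s) - 2 s` (`secondDiff_ge`).

Two consequences: `W t s ≥ -4 s` for every `t` and every `s = 2⁻ᵐ` (`secondDiff_lower`), whereas
`W b s ≥ (2 k - 2) s` for `b ∈ 2⁻ⁿ ℤ` and `s = 2⁻⁽ⁿ⁺ᵏ⁾` (`secondDiff_dyadic`), because `T` has a
logarithmic cusp at dyadic points. Take `k = 4` and let `b` be the multiple of `2⁻ⁿ` just below `x`.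
The second difference of `h ↦ T (x + h) + T (y + h)` at `h = b - x` with step `s` is then at least
`6 s - 4 s = 2 s`. All points involved are within `17 s` of `0`, so differentiability at `0` would
make this second difference `o(s)`.
-/

open Set Filter

/-- The Takagi function `T(x) = Σ_n 2^{-n} dist(2^n x, ℤ)`. -/
noncomputable def takagi (x : ℝ) : ℝ :=
  ∑' n : ℕ, (1/2 : ℝ) ^ n * |(2 : ℝ) ^ n * x - (round ((2 : ℝ) ^ n * x) : ℝ)|

/-- Distance from `u` to the nearest integer. -/
noncomputable def distInt (u : ℝ) : ℝ := |u - (round u : ℝ)|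

/-- Symmetric second difference of `f` at `t` with step `s`. -/
def secondDiff (f : ℝ → ℝ) (t s : ℝ) : ℝ := f (t + s) + f (t - s) - 2 * f t

lemma distInt_le (u : ℝ) (n : ℤ) : distInt u ≤ |u - n| := round_le u n

lemma distInt_nonneg (u : ℝ) : 0 ≤ distInt u := abs_nonneg _

lemma distInt_le_half (u : ℝ) : distInt u ≤ 1 / 2 := abs_sub_round u

lemma distInt_eq {u : ℝ} {n : ℤ} (h : |u - n| ≤ 1 / 2) : distInt u = |u - n| := by
  refine le_antisymm (distInt_le u n) ?_
  by_cases hr : round u = n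
  · rw [distInt, hr]
  · have h1 : (1 : ℝ) ≤ |((n - round u : ℤ) : ℝ)| := by
      rw [← Int.cast_abs]
      exact_mod_cast Int.one_le_abs (sub_ne_zero.mpr (Ne.symm hr))
    have h2 : |((n - round u : ℤ) : ℝ)| ≤ |u - n| + distInt u := by
      have := abs_sub_le (n : ℝ) u (round u)
      rw [abs_sub_comm (n : ℝ) u] at this
      push_cast
      exact this
    linarith

lemma distInt_lip (u v : ℝ) : distInt u ≤ distInt v + |u - v| := by
  have h1 := distInt_le u (round v)
  have h2 := abs_sub_le u v (round v)
  unfold distInt at *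
  linarith

lemma summable_takagi (x : ℝ) :
    Summable fun n : ℕ => (1/2 : ℝ) ^ n * |(2 : ℝ) ^ n * x - (round ((2 : ℝ) ^ n * x) : ℝ)| := by
  refine Summable.of_nonneg_of_le (fun n => by positivity) (fun n => ?_)
    (summable_geometric_of_lt_one (r := (1/2 : ℝ)) (by norm_num) (by norm_num))
  have := distInt_le_half ((2 : ℝ) ^ n * x)
  unfold distInt at this
  exact mul_le_of_le_one_right (by positivity) (by linarith)

lemma takagi_rec (x : ℝ) : takagi x = distInt x + takagi (2 * x) / 2 := by
  have h := (summable_takagi x).tsum_eq_zero_add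
  unfold takagi distInt
  rw [h, ← tsum_div_const]
  congr 1
  · simp
  · refine tsum_congr fun n => ?_
    rw [show (2 : ℝ) ^ (n + 1) * x = 2 ^ n * (2 * x) by ring]
    ring

lemma takagi_add_int (x : ℝ) (z : ℤ) : takagi (x + z) = takagi x := by
  unfold takagi
  refine tsum_congr fun n => ?_
  rw [show (2 : ℝ) ^ n * (x + z) = 2 ^ n * x + ((2 ^ n * z : ℤ) : ℝ) by push_cast; ring,
    round_add_intCast]
  push_cast
  ring_nf

lemma takagi_zero : takagi 0 = 0 := by
  simp [takagi]

lemma takagi_two_pow (k : ℕ) (u : ℝ) (hu : |u| = (1 / 2) ^ k) : takagi u = k * (1 / 2) ^ k := by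
  induction k generalizing u with
  | zero =>
    have h0 := takagi_zero
    rcases eq_or_eq_neg_of_abs_eq hu with h | h
    · have := takagi_add_int 0 1
      subst h
      simp_all
    · have := takagi_add_int 0 (-1)
      subst h
      simp_all
  | succ k ih =>
    have h1 : distInt u = |u| := by
      have : |u - (0 : ℤ)| ≤ 1 / 2 := by
        rw [Int.cast_zero, sub_zero, hu, pow_succ]
        have : ((1 : ℝ) / 2) ^ k ≤ 1 := pow_le_one₀ (by norm_num) (by norm_num)
        linarith
      simpa using distInt_eq this
    rw [takagi_rec, h1, hu, ih (2 * u) (by rw [abs_mul, hu, pow_succ, abs_two]; ring)]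
    push_cast
    ring

lemma secondDiff_rec (t s : ℝ) :
    secondDiff takagi t s = secondDiff distInt t s + secondDiff takagi (2 * t) (2 * s) / 2 := by
  unfold secondDiff
  rw [takagi_rec (t + s), takagi_rec (t - s), takagi_rec t]
  ring_nf

lemma secondDiff_distInt_ge (t : ℝ) {s : ℝ} (hs : 0 ≤ s) : -(2 * s) ≤ secondDiff distInt t s := by
  have h1 := distInt_lip t (t + s)
  have h2 := distInt_lip t (t - s)
  rw [show t - (t + s) = -s by ring, abs_neg, abs_of_nonneg hs] at h1
  rw [show t - (t - s) = s by ring, abs_of_nonneg hs] at h2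
  unfold secondDiff
  linarith

/-- `distInt` is convex on `[n - 1/2, n + 1/2]`. -/
lemma secondDiff_distInt_nonneg {t s : ℝ} {n : ℤ} (hs : 0 ≤ s) (h1 : t + s ≤ n + 1 / 2)
    (h2 : n - 1 / 2 ≤ t - s) : 0 ≤ secondDiff distInt t s := by
  unfold secondDiff
  rw [distInt_eq (u := t + s) (n := n) (abs_le.mpr ⟨by linarith, by linarith⟩),
    distInt_eq (u := t - s) (n := n) (abs_le.mpr ⟨by linarith, by linarith⟩),
    distInt_eq (u := t) (n := n) (abs_le.mpr ⟨by linarith, by linarith⟩)]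
  have h := abs_add_le (t + s - n) (t - s - n)
  rw [show t + s - n + (t - s - n) = 2 * (t - n) by ring, abs_mul, abs_two] at h
  linarith

/-- A negative second difference of `distInt` forces a half-integer within `s` of `t`. -/
lemma secondDiff_distInt_dichotomy (t : ℝ) {s : ℝ} (hs : 0 ≤ s) :
    0 ≤ secondDiff distInt t s ∨ ∃ z : ℤ, |2 * t - z| ≤ 2 * s := by
  have hr := abs_le.mp (abs_sub_round t)
  by_cases h1 : t + s ≤ round t + 1 / 2
  · by_cases h2 : round t - 1 / 2 ≤ t - s
    · exact Or.inl (secondDiff_distInt_nonneg hs h1 h2)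
    · refine Or.inr ⟨2 * round t - 1, ?_⟩
      push_cast
      rw [abs_le]
      constructor <;> linarith
  · refine Or.inr ⟨2 * round t + 1, ?_⟩
    push_cast
    rw [abs_le]
    constructor <;> linarith

/-- Near an integer every doubling step has a nonnegative contribution, since closeness to an
integer relative to the step is preserved by `(t, s) ↦ (2 t, 2 s)`. -/
lemma secondDiff_ge_near (n : ℕ) (t s : ℝ) (hs : 0 ≤ s) (hn : 2 ^ n * s ≤ 1 / 2)
    (z : ℤ) (hz : |t - z| ≤ s) :
    (1 / 2) ^ n * secondDiff takagi (2 ^ n * t) (2 ^ n * s) ≤ secondDiff takagi t s := by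
  induction n generalizing t s z with
  | zero => simp
  | succ n ih =>
    rw [pow_succ, mul_assoc] at hn
    have hs4 : 2 * s ≤ 1 / 2 := by
      have : (1 : ℝ) ≤ 2 ^ n := one_le_pow₀ (by norm_num)
      nlinarith
    have hz' := abs_le.mp hz
    have h0 : 0 ≤ secondDiff distInt t s :=
      secondDiff_distInt_nonneg (n := z) hs (by linarith) (by linarith)
    have h := ih (2 * t) (2 * s) (by linarith) hn (2 * z)
      (by push_cast; rw [abs_le]; constructor <;> linarith)
    rw [secondDiff_rec t s, pow_succ, pow_succ, mul_assoc (2 ^ n), mul_assoc (2 ^ n)]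
    linarith

/-- The loss `2 s` is paid at the first doubling step whose contribution may be negative; after it
the point is near an integer and `secondDiff_ge_near` applies. -/
lemma secondDiff_ge (n : ℕ) (t s : ℝ) (hs : 0 ≤ s) (hn : 2 ^ n * s ≤ 1 / 2) :
    (1 / 2) ^ n * secondDiff takagi (2 ^ n * t) (2 ^ n * s) - 2 * s ≤ secondDiff takagi t s := by
  induction n generalizing t s with
  | zero => simp; linarith
  | succ n ih =>
    rw [pow_succ, mul_assoc] at hn
    rw [secondDiff_rec t s, pow_succ, pow_succ, mul_assoc (2 ^ n), mul_assoc (2 ^ n)]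
    rcases secondDiff_distInt_dichotomy t hs with h0 | ⟨z, hz⟩
    · have h := ih (2 * t) (2 * s) (by linarith) hn
      linarith
    · have h := secondDiff_ge_near n (2 * t) (2 * s) (by linarith) hn z hz
      have h0 := secondDiff_distInt_ge t hs
      linarith

lemma secondDiff_half (t : ℝ) : -1 ≤ secondDiff takagi t (1 / 2) := by
  have h0 := secondDiff_distInt_ge t (s := 1 / 2) (by norm_num)
  -- a step of length one is a period, so the doubled second difference vanishes
  have h1 : secondDiff takagi (2 * t) (2 * (1 / 2)) = 0 := by
    have e1 := takagi_add_int (2 * t) 1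
    have e2 := takagi_add_int (2 * t) (-1)
    push_cast at e1 e2
    unfold secondDiff
    rw [show (2 : ℝ) * (1 / 2) = 1 by norm_num, sub_eq_add_neg (2 * t), e1, e2]
    ring
  rw [secondDiff_rec t, h1]
  linarith

lemma secondDiff_lower (m : ℕ) (t : ℝ) :
    -(4 * (1 / 2) ^ (m + 1)) ≤ secondDiff takagi t ((1 / 2) ^ (m + 1)) := by
  have e : (2 : ℝ) ^ m * (1 / 2) ^ (m + 1) = 1 / 2 := by
    rw [pow_succ, ← mul_assoc, ← mul_pow]; norm_num
  have h := secondDiff_ge m t ((1 / 2) ^ (m + 1)) (by positivity) e.le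
  rw [e] at h
  have h1 := mul_le_mul_of_nonneg_left (secondDiff_half (2 ^ m * t))
    (show (0 : ℝ) ≤ (1 / 2) ^ m by positivity)
  rw [pow_succ] at *
  linarith

/-- The logarithmic cusp of the Takagi function at dyadic points: after `n` doublings `b` becomes an
integer, where the second difference is computed exactly by `takagi_two_pow`. -/
lemma secondDiff_dyadic (n k : ℕ) (z : ℤ) (b : ℝ) (hb : 2 ^ n * b = z) :
    (2 * (k + 1 : ℕ) - 2) * (1 / 2) ^ (n + (k + 1))
      ≤ secondDiff takagi b ((1 / 2) ^ (n + (k + 1))) := by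
  have e : (2 : ℝ) ^ n * (1 / 2) ^ (n + (k + 1)) = (1 / 2) ^ (k + 1) := by
    rw [pow_add, ← mul_assoc, ← mul_pow]; norm_num
  have hk : ((1 : ℝ) / 2) ^ (k + 1) ≤ 1 / 2 := by
    rw [pow_succ]
    have : ((1 : ℝ) / 2) ^ k ≤ 1 := pow_le_one₀ (by norm_num) (by norm_num)
    linarith
  have h := secondDiff_ge n b ((1 / 2) ^ (n + (k + 1))) (by positivity) (e.le.trans hk)
  have h1 : secondDiff takagi z ((1 / 2) ^ (k + 1)) = 2 * ((k + 1 : ℕ) * (1 / 2) ^ (k + 1)) := by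
    have a := takagi_two_pow (k + 1) ((1 / 2) ^ (k + 1)) (abs_of_nonneg (by positivity))
    have a' := takagi_two_pow (k + 1) (-(1 / 2) ^ (k + 1))
      (by rw [abs_neg]; exact abs_of_nonneg (by positivity))
    have c := takagi_add_int ((1 / 2) ^ (k + 1)) z
    have c' := takagi_add_int (-(1 / 2) ^ (k + 1)) z
    have c0 := takagi_add_int 0 z
    rw [zero_add, takagi_zero] at c0
    unfold secondDiff
    rw [add_comm (z : ℝ), c, sub_eq_neg_add (z : ℝ), c', c0, a, a']
    ring
  rw [e, hb, h1] at h
  have e2 : ((1 : ℝ) / 2) ^ (n + (k + 1)) = (1 / 2) ^ n * (1 / 2) ^ (k + 1) := pow_add _ _ _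
  linear_combination h + 2 * (k + 1 : ℕ) * e2

/-- `F(x,y) = T(x) + T(y)` has no finite directional derivative at any point of `(0,1)²` along
the direction `(1,1)`: the difference quotient
`h ↦ ((T(x+h) − T(x)) + (T(y+h) − T(y)))/h` has no finite limit as `h → 0`. -/
theorem stmt19 (x y : ℝ) (hx : x ∈ Ioo (0:ℝ) 1) (hy : y ∈ Ioo (0:ℝ) 1) :
    ¬ ∃ L : ℝ, Tendsto (fun h : ℝ =>
        ((takagi (x + h) - takagi x) + (takagi (y + h) - takagi y)) / h)
      (nhdsWithin 0 {0}ᶜ) (nhds L) := by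
  rintro ⟨L, hL⟩
  rw [Metric.tendsto_nhdsWithin_nhds] at hL
  obtain ⟨δ, hδ, H⟩ := hL (1 / 100) (by norm_num)
  -- multiplied out, the estimate also covers `h = 0`
  have R : ∀ h : ℝ, |h| < δ →
      |(takagi (x + h) - takagi x) + (takagi (y + h) - takagi y) - L * h| ≤ 1 / 100 * |h| := by
    intro h hh
    by_cases h0 : h = 0
    · simp [h0]
    · have := H (x := h) h0 (by simpa using hh)
      rw [Real.dist_eq] at this
      have e : (takagi (x + h) - takagi x) + (takagi (y + h) - takagi y) - L * h =
          (((takagi (x + h) - takagi x) + (takagi (y + h) - takagi y)) / h - L) * h := by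
        field_simp
      rw [e, abs_mul]
      exact mul_le_mul_of_nonneg_right this.le (abs_nonneg h)
  obtain ⟨n, hn⟩ := exists_pow_lt_of_lt_one (show (0 : ℝ) < δ / 2 by linarith)
    (show (1 / 2 : ℝ) < 1 by norm_num)
  set s : ℝ := (1 / 2) ^ (n + (3 + 1)) with hs
  have hs0 : 0 < s := by positivity
  have hns : (1 / 2 : ℝ) ^ n = 16 * s := by rw [hs, pow_add]; norm_num; ring
  have h2n : (2 : ℝ) ^ n * (1 / 2) ^ n = 1 := by rw [← mul_pow]; norm_num
  set b : ℝ := ⌊(2 : ℝ) ^ n * x⌋ * (1 / 2) ^ n with hb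
  have hbz : 2 ^ n * b = ⌊(2 : ℝ) ^ n * x⌋ := by
    rw [hb, mul_left_comm, h2n, mul_one]
  have hx' : x = (2 ^ n * x) * (1 / 2) ^ n := by
    rw [mul_right_comm, h2n, one_mul]
  have hp : (0 : ℝ) ≤ (1 / 2) ^ n := by positivity
  have hbx : b ≤ x := by
    have := mul_le_mul_of_nonneg_right (Int.floor_le ((2 : ℝ) ^ n * x)) hp
    linarith
  have hxb : x ≤ b + 16 * s := by
    have := mul_le_mul_of_nonneg_right (Int.lt_floor_add_one ((2 : ℝ) ^ n * x)).le hp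
    rw [add_mul] at this
    linarith
  have r0 : |b - x| ≤ 16 * s := abs_le.mpr ⟨by linarith, by linarith⟩
  have r1 : |b - x + s| ≤ 17 * s := abs_le.mpr ⟨by linarith, by linarith⟩
  have r2 : |b - x - s| ≤ 17 * s := abs_le.mpr ⟨by linarith, by linarith⟩
  have R0 := abs_le.mp (R (b - x) (by linarith))
  have R1 := abs_le.mp (R (b - x + s) (by linarith))
  have R2 := abs_le.mp (R (b - x - s) (by linarith))
  have D1 := secondDiff_dyadic n 3 _ b hbz
  have D2 := secondDiff_lower (n + 3) (y + (b - x))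
  rw [← hs] at D1
  rw [show (1 / 2 : ℝ) ^ (n + 3 + 1) = s from rfl] at D2
  unfold secondDiff at D1 D2
  rw [show x + (b - x) = b by ring] at R0
  rw [show x + (b - x + s) = b + s by ring, ← add_assoc y] at R1
  rw [show x + (b - x - s) = b - s by ring, ← add_sub_assoc y] at R2
  push_cast at D1
  linarith [R0.1, R0.2, R1.1, R1.2, R2.1, R2.2]
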